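/- Let 2 ≤ n < p and set α := (p−n)/(p−1) ∈ (0,1). Let a_1,…,a_N > 0, let y_1,…,y_N ∈ ℝⁿ be distinct, let K : ℝⁿ → ℝ be a concave C² function, and define u(x) := −Σ_{j=1}^N a_j·|x − y_j|^α + K(x). Then u is continuous on ℝⁿ, its classical gradient ∇u (defined on ℝⁿ \ {y_1,…,y_N}, a set of full Lebesgue measure) satisfies ∫_Ω |∇u|^p dx < ∞ for every bounded open Ω ⊆ ℝⁿ, and for every nonnegative smooth compactly supported function φ : ℝⁿ → ℝ one has ∫_{ℝⁿ} |∇u(x)|^{p−2}·⟨∇u(x), ∇φ(x)⟩ dx ≥ 0. -/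

import Mathlib

open Filter Topology MeasureTheory RealInnerProductSpace
open scoped ENNReal

/-! Replace each `|x - yⱼ|^(α - 2)` in `∇u` by `(|x - yⱼ|² + ε)^((α - 2) / 2)`. The resulting smooth
field `V` is a gradient, and the divergence of its regularized flux `(|V|² + ε)^((p - 2) / 2) V` is
a positive multiple of `(|V|² + ε) tr A + (p - 2)⟨V, A V⟩`, where `A` is the derivative of `V`. For
each fixed `V` this expression is linear in `A`, so the `A` making it nonpositive for *all* `V` form
a convex cone: that is why a nonlinear inequality survives superposition. The cone contains the
contribution of every pole, because `α ≥ (p - n) / (p - 1)`, and every negative semidefinite matrix,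
hence the Hessian of `K`. The inequality follows by parts for each `ε`, and dominated convergence
lets `ε → 0`, as `(1 - α) p < n` makes `|x - yⱼ|^(α - 1)` locally `L^p`. -/

section Divergence

variable {E : Type*} [NormedAddCommGroup E] [InnerProductSpace ℝ E]

/-- The divergence of a vector field, as the trace of its derivative. -/
noncomputable def divergence (G : E → E) (x : E) : ℝ :=
  LinearMap.trace ℝ E (fderiv ℝ G x).toLinearMap

lemma contDiff_gradient [CompleteSpace E] {f : E → ℝ} {m k : WithTop ℕ∞} (hf : ContDiff ℝ k f)
    (hmk : m + 1 ≤ k) : ContDiff ℝ m (gradient f) :=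
  (InnerProductSpace.toDual ℝ E).symm.contDiff.comp (hf.fderiv_right hmk)

lemma hasCompactSupport_gradient [CompleteSpace E] {φ : E → ℝ} (hφ : HasCompactSupport φ) :
    HasCompactSupport (gradient φ) :=
  (hφ.fderiv (𝕜 := ℝ)).comp_left (map_zero (InnerProductSpace.toDual ℝ E).symm)

variable [FiniteDimensional ℝ E] [MeasurableSpace E] [BorelSpace E]
  (μ : Measure E) [μ.IsAddHaarMeasure] {G : E → E} {φ : E → ℝ}

lemma integral_inner_mul_fderiv_eq_neg (hG : ContDiff ℝ 1 G) (hφ : ContDiff ℝ 1 φ)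
    (hφc : HasCompactSupport φ) (v : E) :
    ∫ x, ⟪v, G x⟫ * fderiv ℝ φ x v ∂μ = -∫ x, ⟪v, fderiv ℝ G x v⟫ * φ x ∂μ := by
  have hG₀ : Continuous G := hG.continuous
  have hφ₀ : Continuous φ := hφ.continuous
  refine integral_bilinear_fderiv_right_eq_neg_left_of_integrable
    (B := (ContinuousLinearMap.mul ℝ ℝ).comp (innerSL ℝ v))
    (Continuous.integrable_of_hasCompactSupport (by fun_prop) ?_)
    (Continuous.integrable_of_hasCompactSupport (by fun_prop) ?_)
    (Continuous.integrable_of_hasCompactSupport (by fun_prop) ?_)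
    (fun x _ ↦ hG.differentiable one_ne_zero x) (fun x _ ↦ hφ.differentiable one_ne_zero x)
  · exact hφc.mul_left
  · exact (hφc.fderiv_apply (𝕜 := ℝ) v).mul_left
  · exact hφc.mul_left

theorem integral_inner_gradient_eq_neg_integral_divergence_mul (hG : ContDiff ℝ 1 G)
    (hφ : ContDiff ℝ 1 φ) (hφc : HasCompactSupport φ) :
    ∫ x, ⟪G x, gradient φ x⟫ ∂μ = -∫ x, divergence G x * φ x ∂μ := by
  let b := stdOrthonormalBasis ℝ E
  have hG₀ : Continuous G := hG.continuous
  have hφ₀ : Continuous φ := hφ.continuous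
  have inner_gradient x : ⟪G x, gradient φ x⟫ = ∑ i, ⟪b i, G x⟫ * fderiv ℝ φ x (b i) := by
    rw [← b.sum_inner_mul_inner]
    exact Finset.sum_congr rfl fun i _ ↦ by
      rw [inner_gradient_right, conj_trivial, real_inner_comm]
  have divergence_mul x : divergence G x * φ x = ∑ i, ⟪b i, fderiv ℝ G x (b i)⟫ * φ x := by
    rw [divergence, LinearMap.trace_eq_sum_inner _ b, Finset.sum_mul]
    rfl
  simp_rw [inner_gradient, divergence_mul]
  rw [integral_finsetSum, integral_finsetSum, ← Finset.sum_neg_distrib]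
  · exact Finset.sum_congr rfl fun i _ ↦ integral_inner_mul_fderiv_eq_neg μ hG hφ hφc (b i)
  · exact fun i _ ↦ Continuous.integrable_of_hasCompactSupport (by fun_prop) hφc.mul_left
  · exact fun i _ ↦ Continuous.integrable_of_hasCompactSupport (by fun_prop)
      (hφc.fderiv_apply (𝕜 := ℝ) (b i)).mul_left

lemma integral_inner_gradient_nonneg (hG : ContDiff ℝ 1 G) (hdiv : ∀ x, divergence G x ≤ 0)
    (hφ : ContDiff ℝ 1 φ) (hφc : HasCompactSupport φ) (hφ₀ : ∀ x, 0 ≤ φ x) :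
    0 ≤ ∫ x, ⟪G x, gradient φ x⟫ ∂μ := by
  rw [integral_inner_gradient_eq_neg_integral_divergence_mul μ hG hφ hφc, neg_nonneg]
  exact integral_nonpos fun x ↦ mul_nonpos_of_nonpos_of_nonneg (hdiv x) (hφ₀ x)

end Divergence

section RegularizedPower

open InnerProductSpace

variable {E : Type*} [NormedAddCommGroup E] [InnerProductSpace ℝ E] {s ε : ℝ}

/-- The regularization `(|z|² + ε)^(s/2) z` of the field `|z|^s z`. With `s = α - 2` it replaces the
gradient of `|z|^α / α`, and with `s = p - 2` it turns a gradient into its `p`-Laplacian flux. -/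
noncomputable def regularizedPower (s ε : ℝ) (z : E) : E :=
  (‖z‖ ^ 2 + ε) ^ (s / 2) • z

lemma sq_rpow_half {r : ℝ} (hr : 0 ≤ r) (s : ℝ) : (r ^ 2) ^ (s / 2) = r ^ s := by
  rw [← Real.rpow_natCast_mul hr, Nat.cast_ofNat, mul_div_cancel₀ s two_ne_zero]

lemma regularizedPower_zero (s : ℝ) (z : E) : regularizedPower s 0 z = ‖z‖ ^ s • z := by
  rw [regularizedPower, add_zero, sq_rpow_half (norm_nonneg z)]

lemma norm_regularizedPower (hε : 0 ≤ ε) (z : E) :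
    ‖regularizedPower s ε z‖ = (‖z‖ ^ 2 + ε) ^ (s / 2) * ‖z‖ := by
  rw [regularizedPower, norm_smul, Real.norm_of_nonneg (by positivity)]

lemma norm_regularizedPower_le_of_nonpos (hs : s ≤ 0) (hε : 0 ≤ ε) (z : E) :
    ‖regularizedPower s ε z‖ ≤ ‖z‖ ^ (s + 1) := by
  rcases eq_or_ne z 0 with rfl | hz
  · simpa [regularizedPower] using Real.rpow_nonneg le_rfl _
  have hz' : 0 < ‖z‖ := norm_pos_iff.2 hz
  calc ‖regularizedPower s ε z‖
      = (‖z‖ ^ 2 + ε) ^ (s / 2) * ‖z‖ := norm_regularizedPower hε z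
    _ ≤ (‖z‖ ^ 2) ^ (s / 2) * ‖z‖ := by
        gcongr ?_ * _
        exact Real.rpow_le_rpow_of_nonpos (by positivity) (by linarith) (by linarith)
    _ = ‖z‖ ^ (s + 1) := by rw [sq_rpow_half hz'.le, Real.rpow_add_one hz'.ne']

lemma norm_regularizedPower_le_of_nonneg (hs : 0 ≤ s) (hε : 0 ≤ ε) (hε₁ : ε ≤ 1) {z : E} {R : ℝ}
    (hz : ‖z‖ ≤ R) : ‖regularizedPower s ε z‖ ≤ (R + 1) ^ (s + 1) := by
  have hR : 0 ≤ R := (norm_nonneg z).trans hz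
  calc ‖regularizedPower s ε z‖
      = (‖z‖ ^ 2 + ε) ^ (s / 2) * ‖z‖ := norm_regularizedPower hε z
    _ ≤ ((R + 1) ^ 2) ^ (s / 2) * (R + 1) := by
        gcongr
        · nlinarith [norm_nonneg z]
        · linarith
    _ = (R + 1) ^ (s + 1) := by
        rw [sq_rpow_half (by positivity), Real.rpow_add_one (by positivity)]

lemma tendsto_regularizedPower {ι : Type*} {l : Filter ι} {ε : ι → ℝ} {V : ι → E} {v : E}
    (hV : Tendsto V l (𝓝 v)) (hε : Tendsto ε l (𝓝 0)) (hs : v ≠ 0 ∨ 0 ≤ s) :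
    Tendsto (fun i ↦ regularizedPower s (ε i) (V i)) l (𝓝 (‖v‖ ^ s • v)) := by
  rw [← regularizedPower_zero]
  refine (((hV.norm.pow 2).add hε).rpow_const ?_).smul hV
  exact hs.imp (by simp) fun hs ↦ by positivity

lemma contDiff_regularizedPower (s : ℝ) (hε : 0 < ε) {k : WithTop ℕ∞} :
    ContDiff ℝ k (regularizedPower s ε : E → E) :=
  (((contDiff_norm_sq ℝ).add contDiff_const).rpow_const_of_ne fun z ↦ by positivity).smul
    contDiff_id

lemma hasFDerivAt_regularizedPower (s : ℝ) (hε : 0 < ε) (z : E) :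
    HasFDerivAt (regularizedPower s ε)
      ((‖z‖ ^ 2 + ε) ^ (s / 2 - 1) •
        ((‖z‖ ^ 2 + ε) • ContinuousLinearMap.id ℝ E + s • rankOne ℝ z z)) z := by
  have hpos : 0 < ‖z‖ ^ 2 + ε := by positivity
  have hscalar := ((hasFDerivAt_id z).norm_sq.add_const ε).rpow_const (p := s / 2)
    (Or.inl hpos.ne')
  refine (hscalar.smul (hasFDerivAt_id z)).congr_fderiv ?_
  ext v
  have hpow : (‖z‖ ^ 2 + ε) ^ (s / 2) = (‖z‖ ^ 2 + ε) ^ (s / 2 - 1) * (‖z‖ ^ 2 + ε) := by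
    rw [← Real.rpow_add_one hpos.ne', sub_add_cancel]
  simp only [id_eq, hpow, ContinuousLinearMap.comp_id, add_apply, smul_apply,
    ContinuousLinearMap.id_apply, ContinuousLinearMap.smulRight_apply, coe_innerSL_apply,
    nsmul_eq_mul, Nat.cast_ofNat, smul_eq_mul, smul_add, rankOne_apply]
  module

lemma trace_smul_id_add_rankOne_comp [FiniteDimensional ℝ E] (t c : ℝ) (v : E) (A : E →L[ℝ] E) :
    LinearMap.trace ℝ E ((t • ContinuousLinearMap.id ℝ E + c • rankOne ℝ v v) ∘L A).toLinearMap =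
      t * LinearMap.trace ℝ E A.toLinearMap + c * ⟪v, A v⟫ := by
  rw [ContinuousLinearMap.add_comp, ContinuousLinearMap.smul_comp, ContinuousLinearMap.smul_comp,
    ContinuousLinearMap.id_comp, rankOne_comp]
  simp [trace_rankOne, ContinuousLinearMap.adjoint_inner_left]

lemma divergence_regularizedPower_comp [FiniteDimensional ℝ E] (s : ℝ) (hε : 0 < ε) {V : E → E}
    {x : E} (hV : DifferentiableAt ℝ V x) :
    divergence (fun y ↦ regularizedPower s ε (V y)) x = (‖V x‖ ^ 2 + ε) ^ (s / 2 - 1) *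
      ((‖V x‖ ^ 2 + ε) * divergence V x + s * ⟪V x, fderiv ℝ V x (V x)⟫) := by
  have hcomp := ((hasFDerivAt_regularizedPower s hε (V x)).comp x hV.hasFDerivAt).fderiv
  rw [Function.comp_def] at hcomp
  rw [divergence, hcomp, ContinuousLinearMap.smul_comp, ContinuousLinearMap.toLinearMap_smul,
    map_smul, trace_smul_id_add_rankOne_comp, smul_eq_mul, divergence]

end RegularizedPower

section SupersolutionCone

open InnerProductSpace Module

variable {E : Type*} [NormedAddCommGroup E] [InnerProductSpace ℝ E]

/-- The Hessians `A` at which the `p`-Laplacian in nondivergence form `t tr A + (p - 2)⟨v, A v⟩` is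
nonpositive whatever the gradient `v`. The room left by `t ≥ |v|²` accommodates the regularization
`t = |v|² + ε`. -/
noncomputable def supersolutionCone (E : Type*) [NormedAddCommGroup E] [InnerProductSpace ℝ E]
    (p : ℝ) : PointedCone ℝ (E →L[ℝ] E) where
  carrier := {A | ∀ (t : ℝ) (v : E), ‖v‖ ^ 2 ≤ t →
    t * LinearMap.trace ℝ E A.toLinearMap + (p - 2) * ⟪v, A v⟫ ≤ 0}
  add_mem' {A B} hA hB t v hv := by
    have hAB := add_nonpos (hA t v hv) (hB t v hv)
    simp only [ContinuousLinearMap.toLinearMap_add, map_add, add_apply, inner_add_right]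
    linarith
  zero_mem' t v _ := by simp
  smul_mem' c A hA t v hv := by
    have hcA := mul_nonpos_of_nonneg_of_nonpos c.2 (hA t v hv)
    change t * LinearMap.trace ℝ E ((c : ℝ) • A).toLinearMap + (p - 2) * ⟪v, ((c : ℝ) • A) v⟫ ≤ 0
    simp only [ContinuousLinearMap.toLinearMap_smul, map_smul, smul_apply, inner_smul_right,
      smul_eq_mul]
    linarith

variable {p α : ℝ}

lemma mem_supersolutionCone_of_inner_nonpos [FiniteDimensional ℝ E] (hp : 2 ≤ p) {A : E →L[ℝ] E}
    (hA : ∀ v, ⟪v, A v⟫ ≤ 0) : A ∈ supersolutionCone E p := by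
  intro t v hv
  have htrace : LinearMap.trace ℝ E A.toLinearMap ≤ 0 := by
    rw [LinearMap.trace_eq_sum_inner _ (stdOrthonormalBasis ℝ E)]
    exact Finset.sum_nonpos fun i _ ↦ hA _
  exact add_nonpos (mul_nonpos_of_nonneg_of_nonpos ((sq_nonneg _).trans hv) htrace)
    (mul_nonpos_of_nonneg_of_nonpos (by linarith) (hA v))

lemma neg_smul_id_add_rankOne_mem_supersolutionCone [FiniteDimensional ℝ E] (hp : 2 ≤ p)
    (hα : α ≤ 1) (hαp : p - finrank ℝ E ≤ α * (p - 1)) {z : E} {r : ℝ} (hz : ‖z‖ ^ 2 ≤ r) :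
    -(r • ContinuousLinearMap.id ℝ E + (α - 2) • rankOne ℝ z z) ∈ supersolutionCone E p := by
  intro t v hv
  have hr : 0 ≤ r := (sq_nonneg _).trans hz
  have ht : 0 ≤ t := (sq_nonneg _).trans hv
  have cauchySchwarz : ⟪z, v⟫ ^ 2 ≤ ‖z‖ ^ 2 * ‖v‖ ^ 2 := by
    rw [← mul_pow, ← sq_abs]
    gcongr
    exact abs_real_inner_le_norm z v
  -- The form to be shown nonpositive is minus the sum of the next four terms.
  have hangle : 0 ≤ (p - 2) * (2 - α) * (‖z‖ ^ 2 * ‖v‖ ^ 2 - ⟪z, v⟫ ^ 2) :=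
    mul_nonneg (mul_nonneg (by linarith) (by linarith)) (by linarith)
  have hpole : 0 ≤ (2 - α) * (r - ‖z‖ ^ 2) * (t + (p - 2) * ‖v‖ ^ 2) :=
    mul_nonneg (mul_nonneg (by linarith) (by linarith))
      (add_nonneg ht (mul_nonneg (by linarith) (sq_nonneg _)))
  have hgrad : 0 ≤ (p - 2) * (1 - α) * r * (t - ‖v‖ ^ 2) :=
    mul_nonneg (mul_nonneg (mul_nonneg (by linarith) (by linarith)) hr) (by linarith)
  have hdim : 0 ≤ t * r * (finrank ℝ E - p + α * (p - 1)) :=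
    mul_nonneg (mul_nonneg ht hr) (by linarith)
  have htrace : LinearMap.trace ℝ E
      (r • ContinuousLinearMap.id ℝ E + (α - 2) • rankOne ℝ z z).toLinearMap =
        r * finrank ℝ E + (α - 2) * ‖z‖ ^ 2 := by
    simp [trace_rankOne]
  have hinner : ⟪v, (r • ContinuousLinearMap.id ℝ E + (α - 2) • rankOne ℝ z z) v⟫ =
      r * ‖v‖ ^ 2 + (α - 2) * ⟪z, v⟫ ^ 2 := by
    simp only [add_apply, smul_apply, ContinuousLinearMap.id_apply, rankOne_apply,
      inner_add_right, inner_smul_right, real_inner_self_eq_norm_sq, real_inner_comm z v]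
    ring
  rw [ContinuousLinearMap.toLinearMap_neg, map_neg, htrace, neg_apply, inner_neg_right, hinner]
  linarith

lemma neg_fderiv_regularizedPower_mem_supersolutionCone [FiniteDimensional ℝ E] (hp : 2 ≤ p)
    (hα : α ≤ 1) (hαp : p - finrank ℝ E ≤ α * (p - 1)) {ε : ℝ} (hε : 0 < ε) (z : E) :
    -fderiv ℝ (regularizedPower (α - 2) ε) z ∈ supersolutionCone E p := by
  rw [(hasFDerivAt_regularizedPower _ hε z).fderiv, ← smul_neg]
  exact (supersolutionCone E p).smul_mem (by positivity)
    (neg_smul_id_add_rankOne_mem_supersolutionCone hp hα hαp (by linarith))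

lemma inner_fderiv_gradient_nonpos_of_concaveOn [CompleteSpace E] {K : E → ℝ}
    (hK : ConcaveOn ℝ Set.univ K) (hKd : Differentiable ℝ K) {x : E}
    (hx : DifferentiableAt ℝ (gradient K) x) (v : E) :
    ⟪v, fderiv ℝ (gradient K) x v⟫ ≤ 0 := by
  let line : ℝ →ᵃ[ℝ] E := AffineMap.lineMap x (x + v)
  have hline (t : ℝ) : HasDerivAt line v t := by
    simpa using AffineMap.hasDerivAt_lineMap (a := x) (b := x + v) (x := t)
  have hderiv (t : ℝ) : HasDerivAt (K ∘ line) ⟪v, gradient K (line t)⟫ t := by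
    rw [inner_gradient_right, conj_trivial]
    exact (hKd _).hasFDerivAt.comp_hasDerivAt t (hline t)
  have hanti : Antitone fun t ↦ ⟪v, gradient K (line t)⟫ := by
    have := (hK.comp_affineMap line).antitoneOn_deriv fun t _ ↦ (hderiv t).differentiableAt
    rwa [Set.preimage_univ, antitoneOn_univ, funext fun t ↦ (hderiv t).deriv] at this
  have hderiv₂ : HasDerivAt (fun t ↦ ⟪v, gradient K (line t)⟫)
      ⟪v, fderiv ℝ (gradient K) x v⟫ 0 := by
    have hx' : HasFDerivAt (gradient K) (fderiv ℝ (gradient K) x) (line 0) := by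
      simpa [line] using hx.hasFDerivAt
    exact (innerSL ℝ v).hasFDerivAt.comp_hasDerivAt 0 (hx'.comp_hasDerivAt 0 (hline 0))
  exact hderiv₂.deriv ▸ hanti.deriv_nonpos

end SupersolutionCone

section LimitOfSupersolutions

lemma locallyIntegrable_rpow_of_memLp {X : Type*} [TopologicalSpace X]
    [LocallyCompactSpace X] [MeasurableSpace X] {μ : Measure X} {f : X → ℝ}
    (hf₀ : ∀ x, 0 ≤ f x) {q : ℝ} (hq : 0 < q)
    (hf : ∀ s, IsCompact s → MemLp f (ENNReal.ofReal q) (μ.restrict s)) :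
    LocallyIntegrable (fun x ↦ f x ^ q) μ := by
  refine locallyIntegrable_iff.2 fun s hs ↦ ?_
  have hint := (hf s hs).integrable_norm_rpow (by simpa using hq) ENNReal.ofReal_ne_top
  simpa only [IntegrableOn, ENNReal.toReal_ofReal hq.le, Real.norm_of_nonneg (hf₀ _)] using hint

variable {E : Type*} [NormedAddCommGroup E] [InnerProductSpace ℝ E] [FiniteDimensional ℝ E]
  {p : ℝ}

lemma divergence_regularizedPower_comp_nonpos {ε : ℝ} (hε : 0 < ε) {V : E → E} {x : E}
    (hV : DifferentiableAt ℝ V x) (hVp : fderiv ℝ V x ∈ supersolutionCone E p) :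
    divergence (fun y ↦ regularizedPower (p - 2) ε (V y)) x ≤ 0 := by
  rw [divergence_regularizedPower_comp _ hε hV]
  exact mul_nonpos_of_nonneg_of_nonpos (by positivity) (hVp _ _ (by linarith))

variable [MeasurableSpace E] {μ : Measure E}

theorem integral_norm_rpow_mul_inner_gradient_nonneg_of_tendsto [BorelSpace E]
    [μ.IsAddHaarMeasure] (hp : 2 ≤ p) {V : ℝ → E → E} {W : E → E} {M : E → ℝ}
    (hV : ∀ ε > 0, ContDiff ℝ 1 (V ε))
    (hVp : ∀ ε > 0, ∀ x, fderiv ℝ (V ε) x ∈ supersolutionCone E p)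
    (hVM : ∀ ε > 0, ∀ x, ‖V ε x‖ ≤ M x)
    (hM : ∀ s, IsCompact s → MemLp M (ENNReal.ofReal (p - 1)) (μ.restrict s))
    (hVW : ∀ᵐ x ∂μ, Tendsto (fun ε ↦ V ε x) (𝓝[>] 0) (𝓝 (W x)))
    {φ : E → ℝ} (hφ : ContDiff ℝ 1 φ) (hφc : HasCompactSupport φ) (hφ₀ : ∀ x, 0 ≤ φ x) :
    0 ≤ ∫ x, ‖W x‖ ^ (p - 2) * ⟪W x, gradient φ x⟫ ∂μ := by
  let flux (ε : ℝ) (x : E) : E := regularizedPower (p - 2) ε (V ε x)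
  have flux_contDiff {ε : ℝ} (hε : 0 < ε) : ContDiff ℝ 1 (flux ε) :=
    (contDiff_regularizedPower _ hε).comp (hV ε hε)
  have flux_nonneg {ε : ℝ} (hε : 0 < ε) : 0 ≤ ∫ x, ⟪flux ε x, gradient φ x⟫ ∂μ :=
    integral_inner_gradient_nonneg μ (flux_contDiff hε) (fun x ↦
      divergence_regularizedPower_comp_nonpos hε ((hV ε hε).differentiable one_ne_zero x)
        (hVp ε hε x)) hφ hφc hφ₀
  have hgrad : Continuous (gradient φ) :=
    (contDiff_gradient (m := 0) hφ (zero_add 1).le).continuous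
  have hM₀ x : 0 ≤ M x := (norm_nonneg _).trans (hVM 1 one_pos x)
  have hlim : Tendsto (fun ε ↦ ∫ x, ⟪flux ε x, gradient φ x⟫ ∂μ) (𝓝[>] 0)
      (𝓝 (∫ x, ‖W x‖ ^ (p - 2) * ⟪W x, gradient φ x⟫ ∂μ)) := by
    refine tendsto_integral_filter_of_dominated_convergence
      (fun x ↦ (M x + 1) ^ (p - 1) * ‖gradient φ x‖) ?_ ?_ ?_ ?_
    · filter_upwards [self_mem_nhdsWithin] with ε hε
      exact ((flux_contDiff hε).continuous.inner hgrad).aestronglyMeasurable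
    · filter_upwards [Ioo_mem_nhdsGT one_pos] with ε ⟨hε, hε₁⟩
      refine .of_forall fun x ↦ (norm_inner_le_norm _ _).trans ?_
      gcongr
      calc ‖flux ε x‖ ≤ (M x + 1) ^ (p - 2 + 1) :=
            norm_regularizedPower_le_of_nonneg (by linarith) hε.le hε₁.le (hVM ε hε x)
        _ = (M x + 1) ^ (p - 1) := by ring_nf
    · have hM₁ : LocallyIntegrable (fun x ↦ (M x + 1) ^ (p - 1)) μ := by
        refine locallyIntegrable_rpow_of_memLp (fun x ↦ by linarith [hM₀ x]) (by linarith)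
          fun s hs ↦ ?_
        have : IsFiniteMeasure (μ.restrict s) := ⟨by simpa using hs.measure_lt_top⟩
        exact (hM s hs).add (memLp_const 1)
      exact hM₁.integrable_smul_right_of_hasCompactSupport hgrad.norm
        (hasCompactSupport_gradient hφc).norm
    · filter_upwards [hVW] with x hx
      simp_rw [← real_inner_smul_left]
      exact (tendsto_regularizedPower hx (tendsto_id.mono_left nhdsWithin_le_nhds)
        (.inr (by linarith))).inner tendsto_const_nhds
  exact ge_of_tendsto hlim (eventually_mem_nhdsWithin.mono fun ε hε ↦ flux_nonneg hε)

end LimitOfSupersolutions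

section Poles

open Module

variable {E : Type*} [NormedAddCommGroup E] [InnerProductSpace ℝ E] {α p : ℝ}

lemma hasGradientAt_norm_rpow [CompleteSpace E] {z : E} (hz : z ≠ 0) (α : ℝ) :
    HasGradientAt (fun x : E ↦ ‖x‖ ^ α) (α • ‖z‖ ^ (α - 2) • z) z := by
  have hz' : ‖z‖ ^ 2 ≠ 0 := pow_ne_zero 2 (norm_ne_zero_iff.2 hz)
  have hsq := (hasStrictFDerivAt_norm_sq z).hasFDerivAt.rpow_const (p := α / 2) (Or.inl hz')
  have hpow : (‖z‖ ^ 2) ^ (α / 2 - 1) = ‖z‖ ^ (α - 2) := by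
    rw [← sq_rpow_half (norm_nonneg z), sub_div, div_self two_ne_zero]
  simp_rw [sq_rpow_half (norm_nonneg _)] at hsq
  refine hasGradientAt_iff_hasFDerivAt.2 (hsq.congr_fderiv ?_)
  ext v
  simp only [hpow, smul_apply, coe_innerSL_apply, nsmul_eq_mul, Nat.cast_ofNat, smul_eq_mul,
    map_smul, InnerProductSpace.toDual_apply_apply]
  ring

lemma memLp_norm_rpow [FiniteDimensional ℝ E] [MeasurableSpace E] [BorelSpace E] (μ : Measure E)
    [μ.IsAddHaarMeasure] (hE : 1 ≤ finrank ℝ E) {β q : ℝ} (hq : 0 < q)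
    (hβ : -(β * q) < finrank ℝ E) {s : Set E} (hs : IsCompact s) :
    MemLp (fun x : E ↦ ‖x‖ ^ β) (ENNReal.ofReal q) (μ.restrict s) := by
  have hpow (x : E) : ‖‖x‖ ^ β‖ ^ q = ‖x‖ ^ (β * q) := by
    rw [Real.norm_of_nonneg (by positivity), Real.rpow_mul (norm_nonneg x)]
  have hmeas (γ : ℝ) (ν : Measure E) : AEStronglyMeasurable (fun x : E ↦ ‖x‖ ^ γ) ν :=
    (measurable_norm.pow_const γ).aestronglyMeasurable
  rw [← integrable_norm_rpow_iff (hmeas β _) (by simpa using hq) ENNReal.ofReal_ne_top,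
    ENNReal.toReal_ofReal hq.le]
  simp_rw [hpow]
  refine (locallyIntegrable_of_norm_le_rpow (C := 1) hE hβ (.of_forall fun x ↦ ?_)
    (hmeas _ _)).integrableOn_isCompact hs
  rw [Real.norm_of_nonneg (by positivity), neg_neg, one_mul]

lemma memLp_norm_sub_rpow [FiniteDimensional ℝ E] [MeasurableSpace E] [BorelSpace E]
    (μ : Measure E) [μ.IsAddHaarMeasure] (hE : 1 ≤ finrank ℝ E) {β q : ℝ} (hq : 0 < q)
    (hβ : -(β * q) < finrank ℝ E) (z : E) {s : Set E} (hs : IsCompact s) :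
    MemLp (fun x : E ↦ ‖x - z‖ ^ β) (ENNReal.ofReal q) (μ.restrict s) := by
  have hshift := (measurePreserving_sub_right μ z).restrict_image_emb
    (Homeomorph.subRight z).measurableEmbedding s
  exact (memLp_norm_rpow μ hE hq hβ
    (hs.image (Homeomorph.subRight z).continuous)).comp_measurePreserving hshift

variable {ι : Type*} [Fintype ι] {a : ι → ℝ} {y : ι → E} {K : E → ℝ} {ε : ℝ}

/-- The regularization of the gradient of `-∑ aⱼ|x - yⱼ|^α + K`, smooth across the poles for
`0 < ε`; `ε = 0` gives the gradient itself away from the poles. -/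
noncomputable def regularizedGradient [CompleteSpace E] (α : ℝ) (a : ι → ℝ) (y : ι → E)
    (K : E → ℝ) (ε : ℝ) (x : E) : E :=
  ∑ j, (a j * α) • -regularizedPower (α - 2) ε (x - y j) + gradient K x

/-- A pointwise bound, uniform in `ε`, for `regularizedGradient`. -/
noncomputable def gradientMajorant [CompleteSpace E] (α : ℝ) (a : ι → ℝ) (y : ι → E)
    (K : E → ℝ) (x : E) : ℝ :=
  ∑ j, a j * α * ‖x - y j‖ ^ (α - 1) + ‖gradient K x‖

section Complete

variable [CompleteSpace E]

lemma contDiff_regularizedGradient (hK : ContDiff ℝ 2 K) (hε : 0 < ε) :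
    ContDiff ℝ 1 (regularizedGradient α a y K ε) :=
  (ContDiff.sum fun _ _ ↦ contDiff_const.smul
    ((contDiff_regularizedPower _ hε).comp (contDiff_id.sub contDiff_const)).neg).add
      (contDiff_gradient hK one_add_one_eq_two.le)

lemma norm_regularizedGradient_le (ha : ∀ j, 0 ≤ a j) (hα₀ : 0 ≤ α) (hα₂ : α ≤ 2) (hε : 0 ≤ ε)
    (x : E) : ‖regularizedGradient α a y K ε x‖ ≤ gradientMajorant α a y K x := by
  refine (norm_add_le _ _).trans (add_le_add_left ((norm_sum_le _ _).trans
    (Finset.sum_le_sum fun j _ ↦ ?_)) _)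
  have hc : 0 ≤ a j * α := mul_nonneg (ha j) hα₀
  rw [norm_smul, Real.norm_of_nonneg hc, norm_neg]
  gcongr
  calc ‖regularizedPower (α - 2) ε (x - y j)‖ ≤ ‖x - y j‖ ^ (α - 2 + 1) :=
        norm_regularizedPower_le_of_nonpos (by linarith) hε _
    _ = ‖x - y j‖ ^ (α - 1) := by ring_nf

lemma tendsto_regularizedGradient {x : E} (hx : ∀ j, x ≠ y j) :
    Tendsto (fun ε ↦ regularizedGradient α a y K ε x) (𝓝 0)
      (𝓝 (regularizedGradient α a y K 0 x)) := by
  refine (tendsto_finsetSum _ fun j _ ↦ ?_).add_const _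
  rw [regularizedPower_zero]
  exact (tendsto_regularizedPower tendsto_const_nhds tendsto_id
    (.inl (sub_ne_zero.2 (hx j)))).neg.const_smul _

lemma hasGradientAt_neg_sum_norm_rpow_add {x : E} (hK : DifferentiableAt ℝ K x)
    (hx : ∀ j, x ≠ y j) :
    HasGradientAt (fun x ↦ -∑ j, a j * ‖x - y j‖ ^ α + K x)
      (regularizedGradient α a y K 0 x) x := by
  have hpole (j : ι) := ((hasGradientAt_norm_rpow (sub_ne_zero.2 (hx j)) α).hasFDerivAt.comp x
    ((hasFDerivAt_id x).sub_const (y j))).const_mul (a j)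
  refine hasGradientAt_iff_hasFDerivAt.2 (((HasFDerivAt.fun_sum fun j _ ↦ hpole j).fun_neg.fun_add
    hK.hasGradientAt.hasFDerivAt).congr_fderiv ?_)
  ext v
  simp [regularizedGradient, regularizedPower_zero, Finset.sum_neg_distrib, mul_assoc]

end Complete

variable [FiniteDimensional ℝ E]

lemma fderiv_regularizedGradient_mem_supersolutionCone (hp : 2 ≤ p) (hα₀ : 0 ≤ α) (hα₁ : α ≤ 1)
    (hαp : p - finrank ℝ E ≤ α * (p - 1)) (ha : ∀ j, 0 ≤ a j) (hK : ConcaveOn ℝ Set.univ K)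
    (hK₂ : ContDiff ℝ 2 K) (hε : 0 < ε) (x : E) :
    fderiv ℝ (regularizedGradient α a y K ε) x ∈ supersolutionCone E p := by
  have hKd : DifferentiableAt ℝ (gradient K) x :=
    (contDiff_gradient hK₂ one_add_one_eq_two.le).differentiable one_ne_zero x
  have hpole (j : ι) := ((((contDiff_regularizedPower (α - 2) hε).differentiable one_ne_zero
    (x - y j)).hasFDerivAt.comp x ((hasFDerivAt_id x).sub_const (y j))).fun_neg.fun_const_smul
      (a j * α))
  have hderiv : HasFDerivAt (regularizedGradient α a y K ε) _ x :=
    (HasFDerivAt.fun_sum fun j (_ : j ∈ Finset.univ) ↦ hpole j).fun_add hKd.hasFDerivAt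
  rw [hderiv.fderiv]
  refine add_mem (sum_mem fun j _ ↦ ?_) ?_
  · exact (supersolutionCone E p).smul_mem (mul_nonneg (ha j) hα₀)
      (neg_fderiv_regularizedPower_mem_supersolutionCone hp hα₁ hαp hε (x - y j))
  · exact mem_supersolutionCone_of_inner_nonpos hp
      (inner_fderiv_gradient_nonpos_of_concaveOn hK (hK₂.differentiable two_ne_zero) hKd)

variable [MeasurableSpace E] [BorelSpace E] (μ : Measure E) [μ.IsAddHaarMeasure]

lemma memLp_gradientMajorant (hE : 1 ≤ finrank ℝ E) (hp : 0 < p)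
    (hαp : (1 - α) * p < finrank ℝ E) (hK : ContDiff ℝ 1 K) {s : Set E} (hs : IsCompact s) :
    MemLp (gradientMajorant α a y K) (ENNReal.ofReal p) (μ.restrict s) := by
  have hgrad : Continuous (gradient K) :=
    (contDiff_gradient (m := 0) hK (zero_add 1).le).continuous
  refine (memLp_finsetSum _ fun j _ ↦ (memLp_norm_sub_rpow μ hE hp
    (by linarith) (y j) hs).const_mul (a j * α)).add ?_
  obtain ⟨C, hC⟩ := hs.exists_bound_of_continuousOn hgrad.norm.continuousOn
  have : IsFiniteMeasure (μ.restrict s) := ⟨by simpa using hs.measure_lt_top⟩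
  exact .of_bound hgrad.norm.aestronglyMeasurable C (ae_restrict_of_forall_mem hs.measurableSet hC)

end Poles

theorem stmt16_general {E : Type*} [NormedAddCommGroup E] [InnerProductSpace ℝ E]
    [FiniteDimensional ℝ E] [MeasurableSpace E] [BorelSpace E] (μ : Measure E)
    [μ.IsAddHaarMeasure] {ι : Type*} [Fintype ι] {p α : ℝ} (hp : 2 ≤ p) (hα₀ : 0 < α)
    (hα₁ : α ≤ 1) (hαp : p - Module.finrank ℝ E ≤ α * (p - 1)) {a : ι → ℝ} (ha : ∀ j, 0 ≤ a j)
    (y : ι → E) {K : E → ℝ} (hK : ConcaveOn ℝ Set.univ K) (hK₂ : ContDiff ℝ 2 K) {u : E → ℝ}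
    (hu : u = fun x ↦ -∑ j, a j * ‖x - y j‖ ^ α + K x) :
    Continuous u ∧
    (∀ Ω : Set E, Bornology.IsBounded Ω →
      ∫⁻ x in Ω, ENNReal.ofReal (‖gradient u x‖ ^ p) ∂μ < ⊤) ∧
    (∀ φ : E → ℝ, ContDiff ℝ 1 φ → HasCompactSupport φ → (∀ x, 0 ≤ φ x) →
      0 ≤ ∫ x, ‖gradient u x‖ ^ (p - 2) * ⟪gradient u x, gradient φ x⟫ ∂μ) := by
  have hE : 1 ≤ Module.finrank ℝ E := by
    rw [← Nat.cast_le (α := ℝ), Nat.cast_one]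
    nlinarith
  have : Nontrivial E := Module.nontrivial_of_finrank_pos hE
  have hM {s : Set E} (hs : IsCompact s) :
      MemLp (gradientMajorant α a y K) (ENNReal.ofReal p) (μ.restrict s) :=
    memLp_gradientMajorant μ hE (by linarith) (by linarith) (hK₂.of_le one_le_two) hs
  have hbound {ε : ℝ} (hε : 0 ≤ ε) (x : E) :
      ‖regularizedGradient α a y K ε x‖ ≤ gradientMajorant α a y K x :=
    norm_regularizedGradient_le ha hα₀.le (by linarith) hε x
  have hgrad : ∀ᵐ x ∂μ, (∀ j, x ≠ y j) ∧ gradient u x = regularizedGradient α a y K 0 x := by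
    filter_upwards [ae_all_iff.2 fun j ↦ Measure.ae_ne μ (y j)] with x hx
    exact ⟨hx, hu ▸ (hasGradientAt_neg_sum_norm_rpow_add
      (hK₂.differentiable two_ne_zero x) hx).gradient⟩
  refine ⟨?_, fun Ω hΩ ↦ ?_, fun φ hφ hφc hφ₀ ↦ ?_⟩
  · rw [hu]
    exact (continuous_finsetSum _ fun j _ ↦ continuous_const.mul
      ((continuous_id.sub continuous_const).norm.rpow_const fun x ↦ .inr hα₀.le)).neg.add
        hK₂.continuous
  · have hint := locallyIntegrable_rpow_of_memLp
      (fun x ↦ (norm_nonneg _).trans (hbound le_rfl x)) (by linarith) fun _ ↦ hM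
    refine (lintegral_mono_ae ?_).trans_lt
      ((hint.integrableOn_isCompact hΩ.isCompact_closure).mono_set subset_closure).lintegral_lt_top
    filter_upwards [ae_restrict_of_ae hgrad] with x hx
    rw [hx.2]
    gcongr
    exact hbound le_rfl x
  · refine integral_norm_rpow_mul_inner_gradient_nonneg_of_tendsto hp
      (V := regularizedGradient α a y K)
      (fun ε hε ↦ contDiff_regularizedGradient hK₂ hε)
      (fun ε hε ↦ fderiv_regularizedGradient_mem_supersolutionCone hp hα₀.le hα₁ hαp ha hK hK₂ hε)
      (fun ε hε ↦ hbound (le_of_lt hε))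
      (fun s hs ↦ ?_) (hgrad.mono fun x hx ↦ ?_) hφ hφc hφ₀
    · have : IsFiniteMeasure (μ.restrict s) := ⟨by simpa using hs.measure_lt_top⟩
      exact (hM hs).mono_exponent (ENNReal.ofReal_le_ofReal (by linarith))
    · exact hx.2 ▸ (tendsto_regularizedGradient hx.1).mono_left nhdsWithin_le_nhds

/-- for `2 ≤ n < p`, `α = (p−n)/(p−1)`, weights `aⱼ > 0`, distinct poles
`yⱼ` and a concave `C²` function `K`, the function `u(x) = −Σⱼ aⱼ|x − yⱼ|^α + K(x)`
is continuous, `|∇u|^p` is integrable on every bounded open set, and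
`∫ |∇u|^{p−2}⟨∇u, ∇φ⟩ dx ≥ 0` for every nonnegative `φ ∈ C_c^∞(ℝⁿ)`,
i.e. `u` is a weak supersolution of the p-Laplace equation. -/
theorem stmt16 {n : ℕ} (hn : 2 ≤ n) (p : ℝ) (hp : (n : ℝ) < p)
    (N : ℕ) (a : Fin N → ℝ) (ha : ∀ j, 0 < a j)
    (y : Fin N → EuclideanSpace ℝ (Fin n)) (hy : Function.Injective y)
    (K : EuclideanSpace ℝ (Fin n) → ℝ)
    (hK : ConcaveOn ℝ Set.univ K) (hK2 : ContDiff ℝ 2 K)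
    (u : EuclideanSpace ℝ (Fin n) → ℝ)
    (hu : u = fun x => -∑ j, a j * ‖x - y j‖ ^ ((p - n) / (p - 1)) + K x) :
    Continuous u ∧
    (∀ Ω : Set (EuclideanSpace ℝ (Fin n)), IsOpen Ω → Bornology.IsBounded Ω →
      ∫⁻ x in Ω, ENNReal.ofReal (‖gradient u x‖ ^ p) < ⊤) ∧
    (∀ φ : EuclideanSpace ℝ (Fin n) → ℝ,
      ContDiff ℝ (⊤ : ℕ∞) φ → HasCompactSupport φ → (∀ x, 0 ≤ φ x) →
      0 ≤ ∫ x, ‖gradient u x‖ ^ (p - 2) * ⟪gradient u x, gradient φ x⟫) := by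
  have hn₂ : (2 : ℝ) ≤ n := by exact_mod_cast hn
  have hp₁ : 0 < p - 1 := by linarith
  obtain ⟨hcont, hint, hsuper⟩ := stmt16_general volume (hn₂.trans hp.le)
    (div_pos (sub_pos.2 hp) hp₁) ((div_le_one hp₁).2 (by linarith))
    (by rw [finrank_euclideanSpace_fin, div_mul_cancel₀ _ hp₁.ne']) (fun j ↦ (ha j).le) y hK hK2 hu
  exact ⟨hcont, fun Ω _ ↦ hint Ω, fun φ hφ ↦ hsuper φ (hφ.of_le (mod_cast le_top))⟩
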